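/- For compact operators A, B on a Hilbert space and 0 < p ≤ 1, the modified triangle inequality ‖A + B‖_p^p ≤ ‖A‖_p^p + ‖B‖_p^p holds, where ‖·‖_p denotes the Schatten p-quasinorm (the ℓ^p norm of the singular value sequence). -/

import Mathlib

open scoped ENNReal

/-- The `n`-th approximation number of a bounded operator `A`: the distance of `A`
to operators of rank at most `n`.  For compact operators on a Hilbert space this
coincides with the `n`-th singular value `s_n(A)` (0-indexed). -/
noncomputable def approxNum {H : Type*} [NormedAddCommGroup H] [InnerProductSpace ℂ H]
    [CompleteSpace H] (A : H →L[ℂ] H) (n : ℕ) : ℝ :=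
  sInf {r : ℝ | ∃ F : H →L[ℂ] H,
    Module.rank ℂ (LinearMap.range (F : H →ₗ[ℂ] H)) ≤ (n : Cardinal) ∧ r = ‖A - F‖}

open ContinuousLinearMap InnerProductSpace in
lemma aux_step {H : Type*} [NormedAddCommGroup H] [InnerProductSpace ℂ H]
    [CompleteSpace H] (T : H →L[ℂ] H) (hT : IsCompactOperator (T : H → H)) :
    ∃ e f : H, (T ≠ 0 → ‖e‖ = 1 ∧ ‖f‖ = 1) ∧ (T = 0 → e = 0 ∧ f = 0) ∧
      T e = (‖T‖ : ℂ) • f ∧ adjoint T f = (‖T‖ : ℂ) • e := by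
  by_cases h0 : T = 0
  · exact ⟨0, 0, by simp [h0]⟩
  have hn : ‖T‖ ≠ 0 := by simpa using h0
  have hnC : (‖T‖ : ℂ) ≠ 0 := by exact_mod_cast hn
  have : Nontrivial H := by
    by_contra hnt
    rw [not_nontrivial_iff_subsingleton] at hnt
    exact h0 (Subsingleton.elim _ _)
  set S : H →L[ℂ] H := star T * T with hS
  have hSn : ‖S‖ = ‖T‖ * ‖T‖ := CStarRing.norm_star_mul_self
  have hSc : IsCompactOperator (S : H → H) := hT.clm_comp (star T)
  have hmem : ‖S‖ ∈ spectrum ℝ S :=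
    CStarAlgebra.norm_mem_spectrum_of_nonneg (star_mul_self_nonneg T)
  have hmem2 : ((‖S‖ : ℝ) : ℂ) ∈ spectrum ℂ S := by
    have := (spectrum.algebraMap_mem_iff ℂ (r := ‖S‖) (a := S)).2 hmem
    simpa using this
  have hne : ((‖S‖ : ℝ) : ℂ) ≠ 0 := by rw [hSn]; push_cast; exact mul_ne_zero hnC hnC
  have hev := (hSc.hasEigenvalue_iff_mem_spectrum hne).2 hmem2
  obtain ⟨v, hv⟩ := hev.exists_hasEigenvector
  have hv0 : v ≠ 0 := hv.2
  have hvn : ‖v‖ ≠ 0 := by simpa using hv0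
  have hSv : S v = ((‖S‖ : ℝ) : ℂ) • v := hv.apply_eq_smul
  have hSv' : adjoint T (T v) = ((‖T‖ : ℂ) * ‖T‖) • v := by
    have : adjoint T (T v) = S v := rfl
    rw [this, hSv, hSn]; push_cast; rfl
  have hTv : ‖T v‖ = ‖T‖ * ‖v‖ := by
    have h1 : (‖T v‖ ^ 2 : ℂ) = ((‖T‖ * ‖v‖) ^ 2 : ℂ) := by
      have := adjoint_inner_left T v (T v)
      rw [hSv', inner_smul_left, inner_self_eq_norm_sq_to_K, inner_self_eq_norm_sq_to_K] at this
      simp at this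
      rw [← this]; ring
    have h2 : ‖T v‖ ^ 2 = (‖T‖ * ‖v‖) ^ 2 := by exact_mod_cast h1
    exact (pow_left_inj₀ (by positivity) (by positivity) two_ne_zero).1 h2
  have hvC : (‖v‖ : ℂ) ≠ 0 := by exact_mod_cast hvn
  refine ⟨((‖v‖ : ℂ)⁻¹) • v, ((‖T‖ : ℂ)⁻¹ * (‖v‖ : ℂ)⁻¹) • T v, fun _ => ⟨?_, ?_⟩,
    fun h => absurd h h0, ?_, ?_⟩
  · rw [norm_smul]; simp [hvn]
  · rw [norm_smul, hTv]; simp; field_simp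
  · rw [map_smul, smul_smul]; congr 1; field_simp
  · rw [map_smul, hSv', smul_smul, smul_smul]; congr 1; field_simp

open ContinuousLinearMap InnerProductSpace in
lemma aux_svd {H : Type*} [NormedAddCommGroup H] [InnerProductSpace ℂ H]
    [CompleteSpace H] (A : H →L[ℂ] H) (hA : IsCompactOperator (A : H → H)) :
    ∃ (e f : ℕ → H) (σ : ℕ → ℝ), (∀ n, 0 ≤ σ n) ∧ Antitone σ ∧
      (∀ n, σ n ≠ 0 → ‖e n‖ = 1 ∧ ‖f n‖ = 1) ∧ (∀ n, σ n = 0 → e n = 0 ∧ f n = 0) ∧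
      (∀ i j, i ≠ j → inner ℂ (e i) (e j) = 0) ∧ (∀ i j, i ≠ j → inner ℂ (f i) (f j) = 0) ∧
      (∀ n, A (e n) = (σ n : ℂ) • f n) ∧
      (∀ n, ‖A - ∑ j ∈ Finset.range n, (σ j : ℂ) • rankOne ℂ (f j) (e j)‖ = σ n) := by
  have hstep : ∀ T : H →L[ℂ] H, ∃ e f : H, IsCompactOperator (T : H → H) →
      (T ≠ 0 → ‖e‖ = 1 ∧ ‖f‖ = 1) ∧ (T = 0 → e = 0 ∧ f = 0) ∧
      T e = (‖T‖ : ℂ) • f ∧ adjoint T f = (‖T‖ : ℂ) • e := by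
    intro T
    by_cases hT : IsCompactOperator (T : H → H)
    · obtain ⟨e, f, h⟩ := aux_step T hT
      exact ⟨e, f, fun _ => h⟩
    · exact ⟨0, 0, fun h => absurd h hT⟩
  choose E F hEF using hstep
  let R : ℕ → (H →L[ℂ] H) := fun n =>
    Nat.rec A (fun _ T => T - (‖T‖ : ℂ) • rankOne ℂ (F T) (E T)) n
  have hR0 : R 0 = A := rfl
  have hRs : ∀ n, R (n + 1) = R n - (‖R n‖ : ℂ) • rankOne ℂ (F (R n)) (E (R n)) := fun n => rfl
  clear_value R
  have hrc : ∀ x y : H, IsCompactOperator (rankOne ℂ x y : H → H) := by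
    intro x y
    have h1 : IsCompactOperator ((innerSL ℂ y : H →L[ℂ] ℂ) : H → ℂ) :=
      isCompactOperator_of_locallyCompactSpace_dom (innerSL ℂ y : H →L[ℂ] ℂ)
    have := h1.clm_comp ((ContinuousLinearMap.id ℂ ℂ).smulRight x)
    exact this
  have hRc : ∀ n, IsCompactOperator (R n : H → H) := by
    intro n
    induction n with
    | zero => rw [hR0]; exact hA
    | succ n ih => rw [hRs]; exact ih.sub ((hrc _ _).smul (‖R n‖ : ℂ))
  have h1 : ∀ n, ‖R n‖ ≠ 0 → ‖E (R n)‖ = 1 ∧ ‖F (R n)‖ = 1 := fun n hn =>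
    (hEF _ (hRc n)).1 (by simpa using hn)
  have h2 : ∀ n, ‖R n‖ = 0 → E (R n) = 0 ∧ F (R n) = 0 := fun n hn =>
    (hEF _ (hRc n)).2.1 (by simpa using hn)
  have h3 : ∀ n, R n (E (R n)) = (‖R n‖ : ℂ) • F (R n) := fun n => (hEF _ (hRc n)).2.2.1
  have h4 : ∀ n, adjoint (R n) (F (R n)) = (‖R n‖ : ℂ) • E (R n) :=
    fun n => (hEF _ (hRc n)).2.2.2
  have hRx : ∀ n x, R (n + 1) x = R n x - ((‖R n‖ : ℂ) * inner ℂ (E (R n)) x) • F (R n) := by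
    intro n x; rw [hRs, sub_apply, smul_apply, rankOne_apply, smul_smul]
  have hRax : ∀ n x, adjoint (R (n + 1)) x =
      adjoint (R n) x - ((‖R n‖ : ℂ) * inner ℂ (F (R n)) x) • E (R n) := by
    intro n x; rw [hRs, map_sub, map_smulₛₗ, adjoint_rankOne, sub_apply, smul_apply, rankOne_apply, smul_smul]; simp
  have key : ∀ n, ∀ j < n, R n (E (R j)) = 0 ∧ adjoint (R n) (F (R j)) = 0 ∧
      inner ℂ (E (R n)) (E (R j)) = 0 ∧ inner ℂ (F (R n)) (F (R j)) = 0 := by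
    have hk : ∀ n, (∀ j < n, R n (E (R j)) = 0 ∧ adjoint (R n) (F (R j)) = 0) := by
      intro n
      induction n with
      | zero => intro j hj; omega
      | succ n ih =>
        intro j hj
        rw [hRx, hRax]
        rcases Nat.lt_succ_iff_lt_or_eq.1 hj with hj | rfl
        · obtain ⟨a, b⟩ := ih j hj
          rw [a, b]
          have c1 : (‖R n‖ : ℂ) * inner ℂ (E (R n)) (E (R j)) = 0 := by
            have := adjoint_inner_left (R n) (E (R j)) (F (R n))
            rw [h4, a, inner_smul_left] at this
            simpa using this
          have c2 : (‖R n‖ : ℂ) * inner ℂ (F (R n)) (F (R j)) = 0 := by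
            have := adjoint_inner_right (R n) (E (R n)) (F (R j))
            rw [h3, b, inner_smul_left] at this
            simpa using this.symm
          rw [c1, c2]; simp
        · rw [h3, h4]
          by_cases h0 : ‖R j‖ = 0
          · simp [h0]
          · simp [inner_self_eq_norm_sq_to_K, (h1 j h0).1, (h1 j h0).2]
    intro n j hj
    obtain ⟨a, b⟩ := hk n j hj
    refine ⟨a, b, ?_⟩
    by_cases h0 : ‖R n‖ = 0
    · simp [h2 n h0]
    have h0C : (‖R n‖ : ℂ) ≠ 0 := by exact_mod_cast h0
    constructor
    · have := adjoint_inner_left (R n) (E (R j)) (F (R n))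
      rw [h4, a, inner_smul_left] at this
      simpa [h0, h0C] using this
    · have := adjoint_inner_right (R n) (E (R n)) (F (R j))
      rw [h3, b, inner_smul_left] at this
      simpa [h0, h0C] using this.symm
  have hsum : ∀ n, A - ∑ j ∈ Finset.range n, (‖R j‖ : ℂ) • rankOne ℂ (F (R j)) (E (R j)) = R n := by
    intro n
    induction n with
    | zero => simp [hR0]
    | succ n ih => rw [Finset.sum_range_succ, ← sub_sub, ih, hRs]
  refine ⟨fun n => E (R n), fun n => F (R n), fun n => ‖R n‖, fun n => norm_nonneg _, ?_, h1, h2,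
    ?_, ?_, ?_, fun n => by simp only [hsum]⟩
  · refine antitone_nat_of_succ_le fun n => ?_
    refine ContinuousLinearMap.opNorm_le_bound _ (norm_nonneg _) fun x => ?_
    have : R (n + 1) x = R n (x - inner ℂ (E (R n)) x • E (R n)) := by
      rw [hRx, map_sub, map_smul, h3, smul_smul, mul_comm]
    rw [this]
    refine (ContinuousLinearMap.le_opNorm _ _).trans ?_
    gcongr
    by_cases h0 : ‖R n‖ = 0
    · simp [h2 n h0]
    · have h5 : ‖x - inner ℂ (E (R n)) x • E (R n)‖ ^ 2 ≤ ‖x‖ ^ 2 := by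
        rw [@norm_sub_sq ℂ, inner_smul_right, norm_smul, (h1 n h0).1, inner_mul_symm_re_eq_norm,
          norm_mul, norm_inner_symm]
        nlinarith [sq_nonneg ‖inner ℂ (E (R n)) x‖]
      exact (pow_le_pow_iff_left₀ (norm_nonneg _) (norm_nonneg _) two_ne_zero).1 h5
  · intro i j hij
    rcases lt_or_gt_of_ne hij with h | h
    · exact inner_eq_zero_symm.1 (key j i h).2.2.1
    · exact (key i j h).2.2.1
  · intro i j hij
    rcases lt_or_gt_of_ne hij with h | h
    · exact inner_eq_zero_symm.1 (key j i h).2.2.2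
    · exact (key i j h).2.2.2
  · intro n
    have := congrArg (fun T : H →L[ℂ] H => T (E (R n))) (hsum n)
    simp only [sub_apply, sum_apply, smul_apply, rankOne_apply] at this
    rw [Finset.sum_eq_zero, sub_zero, h3] at this
    · exact this
    · intro j hj
      have := (key n j (Finset.mem_range.1 hj)).2.2.1
      rw [inner_eq_zero_symm.1 this]; simp
lemma aux_bessel {H : Type*} [NormedAddCommGroup H] [InnerProductSpace ℂ H]
    (e : ℕ → H) (h1 : ∀ n, e n ≠ 0 → ‖e n‖ = 1) (h2 : ∀ i j, i ≠ j → inner ℂ (e i) (e j) = 0)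
    (N : ℕ) (x : H) : ∑ i ∈ Finset.range N, ‖inner ℂ (e i) x‖ ^ 2 ≤ ‖x‖ ^ 2 := by
  classical
  have ho : Orthonormal ℂ (fun i : {i // e i ≠ 0} => e i.1) :=
    ⟨fun i => h1 _ i.2, fun i j hij => h2 _ _ (fun h => hij (Subtype.ext h))⟩
  have := ho.sum_inner_products_le x (s := (Finset.range N).subtype (fun i => e i ≠ 0))
  refine le_trans (le_of_eq ?_) this
  rw [Finset.sum_subtype_eq_sum_filter (f := fun i => ‖inner ℂ (e i) x‖ ^ 2), Finset.sum_filter]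
  refine Finset.sum_congr rfl fun i _ => ?_
  split_ifs with h
  · rfl
  · have : e i = 0 := by simpa using h
    simp [this]

lemma approxNum_nonneg' {H : Type*} [NormedAddCommGroup H] [InnerProductSpace ℂ H]
    [CompleteSpace H] (A : H →L[ℂ] H) (n : ℕ) : 0 ≤ approxNum A n := by
  apply Real.sInf_nonneg
  rintro r ⟨F, -, rfl⟩
  exact norm_nonneg _

lemma approxNum_le' {H : Type*} [NormedAddCommGroup H] [InnerProductSpace ℂ H]
    [CompleteSpace H] (A F : H →L[ℂ] H) (n : ℕ)
    (hF : Module.rank ℂ (LinearMap.range (F : H →ₗ[ℂ] H)) ≤ (n : Cardinal)) :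
    approxNum A n ≤ ‖A - F‖ := by
  refine csInf_le ⟨0, ?_⟩ ⟨F, hF, rfl⟩
  rintro r ⟨F, -, rfl⟩
  exact norm_nonneg _

lemma le_approxNum' {H : Type*} [NormedAddCommGroup H] [InnerProductSpace ℂ H]
    [CompleteSpace H] (A : H →L[ℂ] H) (n : ℕ) (c : ℝ)
    (h : ∀ F : H →L[ℂ] H, Module.rank ℂ (LinearMap.range (F : H →ₗ[ℂ] H)) ≤ (n : Cardinal) →
      c ≤ ‖A - F‖) :
    c ≤ approxNum A n := by
  refine le_csInf ⟨‖A - 0‖, 0, ?_, rfl⟩ ?_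
  · have : LinearMap.range ((0 : H →L[ℂ] H) : H →ₗ[ℂ] H) = ⊥ := by
      rw [LinearMap.range_eq_bot]; rfl
    rw [this]; simp
  · rintro r ⟨F, hF, rfl⟩
    exact h F hF

lemma approxNum_shift' {H : Type*} [NormedAddCommGroup H] [InnerProductSpace ℂ H]
    [CompleteSpace H] (C F : H →L[ℂ] H) (n m : ℕ)
    (hF : Module.rank ℂ (LinearMap.range (F : H →ₗ[ℂ] H)) ≤ (m : Cardinal)) :
    approxNum C (n + m) ≤ approxNum (C - F) n := by
  refine le_approxNum' _ _ _ fun G hG => ?_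
  rw [sub_sub]
  refine approxNum_le' _ _ _ ?_
  have := LinearMap.rank_add_le (F : H →ₗ[ℂ] H) (G : H →ₗ[ℂ] H)
  refine this.trans ?_
  push_cast
  rw [add_comm (n : Cardinal)]
  exact add_le_add hF hG

open InnerProductSpace in
lemma aux_rank_sum {H : Type*} [NormedAddCommGroup H] [InnerProductSpace ℂ H]
    [CompleteSpace H] (σ : ℕ → ℂ) (e f : ℕ → H) (n : ℕ) :
    Module.rank ℂ (LinearMap.range
      ((∑ j ∈ Finset.range n, σ j • rankOne ℂ (f j) (e j) : H →L[ℂ] H) : H →ₗ[ℂ] H))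
        ≤ (n : Cardinal) := by
  classical
  have hsub : LinearMap.range
      ((∑ j ∈ Finset.range n, σ j • rankOne ℂ (f j) (e j) : H →L[ℂ] H) : H →ₗ[ℂ] H) ≤
      Submodule.span ℂ (((Finset.range n).image f : Finset H) : Set H) := by
    rintro _ ⟨x, rfl⟩
    simp only [ContinuousLinearMap.coe_coe, sum_apply,
      smul_apply, rankOne_apply]
    refine Submodule.sum_mem _ fun j hj => ?_
    refine Submodule.smul_mem _ _ (Submodule.smul_mem _ _ (Submodule.subset_span ?_))
    exact Finset.mem_coe.2 (Finset.mem_image_of_mem _ hj)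
  refine (Submodule.rank_mono hsub).trans ((rank_span_finset_le _).trans ?_)
  exact_mod_cast Finset.card_image_le.trans (by simp)

lemma aux_norm_sum {H ι : Type*} [NormedAddCommGroup H] [InnerProductSpace ℂ H] [Fintype ι]
    (v : ι → H) (hv : Orthonormal ℂ v) (c : ι → ℂ) :
    ‖∑ i, c i • v i‖ ^ 2 = ∑ i, ‖c i‖ ^ 2 := by
  have h := hv.inner_sum c c Finset.univ
  rw [inner_self_eq_norm_sq_to_K] at h
  have h2 : ((‖∑ i, c i • v i‖ ^ 2 : ℝ) : ℂ) = ((∑ i, ‖c i‖ ^ 2 : ℝ) : ℂ) := by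
    push_cast
    refine h.trans (Finset.sum_congr rfl fun i _ => ?_)
    rw [Complex.conj_mul']
  exact_mod_cast h2

lemma aux_lower {H : Type*} [NormedAddCommGroup H] [InnerProductSpace ℂ H]
    [CompleteSpace H] (A : H →L[ℂ] H) (e f : ℕ → H) (σ : ℕ → ℝ)
    (h0 : ∀ n, 0 ≤ σ n) (hm : Antitone σ)
    (h1 : ∀ n, σ n ≠ 0 → ‖e n‖ = 1 ∧ ‖f n‖ = 1)
    (he : ∀ i j, i ≠ j → inner ℂ (e i) (e j) = 0) (hf : ∀ i j, i ≠ j → inner ℂ (f i) (f j) = 0)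
    (hA : ∀ n, A (e n) = (σ n : ℂ) • f n) (n : ℕ) : σ n ≤ approxNum A n := by
  refine le_approxNum' _ _ _ fun F hF => ?_
  rcases (h0 n).eq_or_lt with h | hpos
  · rw [← h]; exact norm_nonneg _
  have hne : ∀ j : Fin (n + 1), σ j ≠ 0 := fun j =>
    (hpos.trans_le (hm (Nat.lt_succ_iff.1 j.2))).ne'
  have hoe : Orthonormal ℂ (fun j : Fin (n + 1) => e j) :=
    ⟨fun j => (h1 _ (hne j)).1, fun i j hij => he _ _ (fun h => hij (Fin.ext h))⟩
  have hof : Orthonormal ℂ (fun j : Fin (n + 1) => f j) :=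
    ⟨fun j => (h1 _ (hne j)).2, fun i j hij => hf _ _ (fun h => hij (Fin.ext h))⟩
  let G : (Fin (n + 1) → ℂ) →ₗ[ℂ] LinearMap.range (F : H →ₗ[ℂ] H) :=
    (F : H →ₗ[ℂ] H).rangeRestrict ∘ₗ Fintype.linearCombination ℂ (fun j : Fin (n + 1) => e j)
  have hG : ¬ Function.Injective G := by
    intro hinj
    have h3 := LinearMap.lift_rank_le_of_injective G hinj
    have h4 : Cardinal.lift.{0} (Module.rank ℂ (LinearMap.range (F : H →ₗ[ℂ] H))) ≤ (n : Cardinal) := by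
      simpa using hF
    have h5 := h3.trans h4
    rw [rank_fin_fun] at h5
    simp only [Cardinal.lift_natCast] at h5
    have h6 : n + 1 ≤ n := by exact_mod_cast h5
    omega
  rw [← LinearMap.ker_eq_bot, Submodule.eq_bot_iff] at hG
  push Not at hG
  obtain ⟨c, hc, hc0⟩ := hG
  set x : H := ∑ j : Fin (n + 1), c j • e j with hx
  have hFx : F x = 0 := by
    have : G c = 0 := hc
    have := congrArg Subtype.val this
    rw [hx]
    simpa [G, Fintype.linearCombination_apply] using this
  have hAx : A x = ∑ j : Fin (n + 1), (c j * σ j) • f j := by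
    rw [hx, map_sum]
    refine Finset.sum_congr rfl fun j _ => ?_
    rw [map_smul, hA, smul_smul]
  have hxn : ‖x‖ ^ 2 = ∑ j, ‖c j‖ ^ 2 := aux_norm_sum _ hoe c
  have hAxn : ‖A x‖ ^ 2 = ∑ j : Fin (n + 1), ‖c j * σ j‖ ^ 2 := by
    rw [hAx]; exact aux_norm_sum _ hof _
  have hxpos : 0 < ‖x‖ := by
    obtain ⟨j, hj⟩ := Function.ne_iff.1 hc0
    have : 0 < ‖x‖ ^ 2 := by
      rw [hxn]
      refine Finset.sum_pos' (fun i _ => by positivity) ⟨j, Finset.mem_univ _, ?_⟩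
      have : c j ≠ 0 := hj
      positivity
    exact lt_of_le_of_ne (norm_nonneg _) (fun h => by rw [← h] at this; simp at this)
  have hle : (σ n * ‖x‖) ^ 2 ≤ ‖A x‖ ^ 2 := by
    rw [hAxn, mul_pow, hxn, Finset.mul_sum]
    refine Finset.sum_le_sum fun j _ => ?_
    rw [norm_mul, mul_pow, mul_comm]
    have : σ n ≤ ‖(σ j : ℂ)‖ := by
      rw [Complex.norm_real, Real.norm_eq_abs, abs_of_nonneg (h0 _)]
      exact hm (Nat.lt_succ_iff.1 j.2)
    gcongr
  have hle2 : σ n * ‖x‖ ≤ ‖A x‖ := (pow_le_pow_iff_left₀ (by positivity) (norm_nonneg _) two_ne_zero).1 hle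
  have : ‖A x‖ ≤ ‖A - F‖ * ‖x‖ := by
    have := (A - F).le_opNorm x
    simpa [hFx] using this
  exact le_of_mul_le_mul_right (hle2.trans this) hxpos

open InnerProductSpace in
lemma aux_svd2 {H : Type*} [NormedAddCommGroup H] [InnerProductSpace ℂ H]
    [CompleteSpace H] (A : H →L[ℂ] H) (hA : IsCompactOperator (A : H → H)) :
    ∃ (e f : ℕ → H), (∀ n, ‖e n‖ ≤ 1) ∧ (∀ n, ‖f n‖ ≤ 1) ∧
      (∀ N x, ∑ i ∈ Finset.range N, ‖inner ℂ (e i) x‖ ^ 2 ≤ ‖x‖ ^ 2) ∧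
      (∀ N x, ∑ i ∈ Finset.range N, ‖inner ℂ (f i) x‖ ^ 2 ≤ ‖x‖ ^ 2) ∧
      (∀ n, approxNum A n ≤ ‖inner ℂ (f n) (A (e n))‖) ∧
      (∀ n, ‖A - ∑ j ∈ Finset.range n, (approxNum A j : ℂ) • rankOne ℂ (f j) (e j)‖
        = approxNum A n) := by
  obtain ⟨e, f, σ, h0, hm, h1, h2, he, hf, hAe, hn⟩ := aux_svd A hA
  have hs : ∀ n, σ n = approxNum A n := fun n =>
    le_antisymm (aux_lower A e f σ h0 hm h1 he hf hAe n) (by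
      rw [← hn n]; exact approxNum_le' _ _ _ (aux_rank_sum _ _ _ _))
  have hne : ∀ n, e n ≠ 0 → ‖e n‖ = 1 := fun n h => (h1 n (fun h' => h (h2 n h').1)).1
  have hnf : ∀ n, f n ≠ 0 → ‖f n‖ = 1 := fun n h => (h1 n (fun h' => h (h2 n h').2)).2
  refine ⟨e, f, fun n => ?_, fun n => ?_, aux_bessel e hne he, aux_bessel f hnf hf, fun n => ?_,
    fun n => ?_⟩
  · by_cases h : e n = 0
    · simp [h]
    · exact (hne n h).le
  · by_cases h : f n = 0
    · simp [h]
    · exact (hnf n h).le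
  · rw [← hs, hAe, inner_smul_right, norm_mul, inner_self_eq_norm_sq_to_K]
    by_cases h : σ n = 0
    · simp [h]
    · simp [(h1 n h).2, le_abs_self]
  · simp only [← hs]; exact hn n

open InnerProductSpace in
lemma aux_trace {H : Type*} [NormedAddCommGroup H] [InnerProductSpace ℂ H]
    [CompleteSpace H] (A : H →L[ℂ] H) (hA : IsCompactOperator (A : H → H)) (k : ℕ) :
    ∃ F : H →L[ℂ] H, Module.rank ℂ (LinearMap.range (F : H →ₗ[ℂ] H)) ≤ (k : Cardinal) ∧
      IsCompactOperator (F : H → H) ∧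
      ∀ (e f : ℕ → H), (∀ n, ‖e n‖ ≤ 1) → (∀ n, ‖f n‖ ≤ 1) →
      (∀ N x, ∑ i ∈ Finset.range N, ‖inner ℂ (e i) x‖ ^ 2 ≤ ‖x‖ ^ 2) →
      (∀ N x, ∑ i ∈ Finset.range N, ‖inner ℂ (f i) x‖ ^ 2 ≤ ‖x‖ ^ 2) → ∀ N : ℕ,
      ENNReal.ofReal (∑ i ∈ Finset.range N, ‖inner ℂ (f i) ((A - F) (e i))‖) ≤
        ∑' n, ENNReal.ofReal (approxNum A (n + k)) := by
  obtain ⟨v, u, hv1, hu1, -, -, -, hn⟩ := aux_svd2 A hA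
  set s := approxNum A with hs
  have hs0 : ∀ n, 0 ≤ s n := approxNum_nonneg' A
  set P : ℕ → (H →L[ℂ] H) := fun n => ∑ j ∈ Finset.range n, (s j : ℂ) • rankOne ℂ (u j) (v j)
    with hP
  have hPc : ∀ n, IsCompactOperator (P n : H → H) := by
    intro n
    have hrc : ∀ x y : H, IsCompactOperator (rankOne ℂ x y : H → H) := by
      intro x y
      have h1 : IsCompactOperator ((innerSL ℂ y : H →L[ℂ] ℂ) : H → ℂ) :=
        isCompactOperator_of_locallyCompactSpace_dom (innerSL ℂ y : H →L[ℂ] ℂ)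
      have := h1.clm_comp ((ContinuousLinearMap.id ℂ ℂ).smulRight x)
      exact this
    induction n with
    | zero => simpa [hP] using isCompactOperator_zero
    | succ n ih =>
      have : P (n + 1) = P n + (s n : ℂ) • rankOne ℂ (u n) (v n) := Finset.sum_range_succ _ _
      rw [this]
      exact ih.add ((hrc _ _).smul (s n : ℂ))
  refine ⟨P k, aux_rank_sum _ _ _ _, hPc k, fun e f he1 hf1 hbe hbf N => ?_⟩
  have hm : ∀ m, ∑ i ∈ Finset.range N, ‖inner ℂ (f i) ((A - P k) (e i))‖ ≤
      ∑ j ∈ Finset.range m, s (j + k) + N * s (m + k) := by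
    intro m
    have hdec : A - P k = ∑ j ∈ Finset.range m, (s (j + k) : ℂ) • rankOne ℂ (u (j + k)) (v (j + k))
        + (A - P (m + k)) := by
      have : P (m + k) = P k +
          ∑ j ∈ Finset.range m, (s (j + k) : ℂ) • rankOne ℂ (u (j + k)) (v (j + k)) := by
        rw [add_comm m k, hP]
        simp only [Finset.sum_range_add]
        congr 1
        refine Finset.sum_congr rfl fun j _ => ?_
        rw [add_comm k j]
      rw [this]; abel
    have hterm : ∀ i, ‖inner ℂ (f i) ((A - P k) (e i))‖ ≤
        ∑ j ∈ Finset.range m, s (j + k) * (‖inner ℂ (f i) (u (j + k))‖ *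
          ‖inner ℂ (e i) (v (j + k))‖) + s (m + k) := by
      intro i
      rw [hdec, add_apply, inner_add_right]
      refine (norm_add_le _ _).trans (add_le_add ?_ ?_)
      · simp only [sum_apply,
          smul_apply, rankOne_apply, inner_sum]
        refine (norm_sum_le _ _).trans (Finset.sum_le_sum fun j _ => le_of_eq ?_)
        rw [inner_smul_right, inner_smul_right, norm_mul, norm_mul, Complex.norm_real,
          Real.norm_eq_abs, abs_of_nonneg (hs0 _), norm_inner_symm (v (j + k))]
        ring
      · refine (norm_inner_le_norm _ _).trans ?_
        have h1 := (A - P (m + k)).le_opNorm (e i)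
        rw [hn] at h1
        calc ‖f i‖ * ‖(A - P (m + k)) (e i)‖ ≤ 1 * (s (m + k) * 1) := by
              refine mul_le_mul (hf1 i) (h1.trans ?_) (norm_nonneg _) zero_le_one
              exact mul_le_mul_of_nonneg_left (he1 i) (hs0 _)
          _ = s (m + k) := by ring
    refine (Finset.sum_le_sum fun i _ => hterm i).trans ?_
    rw [Finset.sum_add_distrib, Finset.sum_comm]
    refine add_le_add (Finset.sum_le_sum fun j _ => ?_) (by simp)
    rw [← Finset.mul_sum]
    refine mul_le_of_le_one_right (hs0 _) ?_
    have h1 : ∑ i ∈ Finset.range N, ‖inner ℂ (f i) (u (j + k))‖ ^ 2 ≤ 1 :=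
      (hbf _ _).trans (pow_le_one₀ (norm_nonneg _) (hu1 _))
    have h2 : ∑ i ∈ Finset.range N, ‖inner ℂ (e i) (v (j + k))‖ ^ 2 ≤ 1 :=
      (hbe _ _).trans (pow_le_one₀ (norm_nonneg _) (hv1 _))
    calc _ ≤ ∑ i ∈ Finset.range N, ((‖inner ℂ (f i) (u (j + k))‖ ^ 2 +
          ‖inner ℂ (e i) (v (j + k))‖ ^ 2) / 2) := by
          refine Finset.sum_le_sum fun i _ => ?_
          nlinarith [sq_nonneg (‖inner ℂ (f i) (u (j + k))‖ - ‖inner ℂ (e i) (v (j + k))‖)]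
      _ ≤ 1 := by
          rw [← Finset.sum_div, Finset.sum_add_distrib]; linarith
  by_cases htop : ∑' n, ENNReal.ofReal (s (n + k)) = ⊤
  · rw [htop]; exact le_top
  have hlim := ENNReal.tendsto_atTop_zero_of_tsum_ne_top htop
  have hlim2 : Filter.Tendsto (fun m => ∑' n, ENNReal.ofReal (s (n + k)) +
      (N : ℝ≥0∞) * ENNReal.ofReal (s (m + k))) Filter.atTop
      (nhds (∑' n, ENNReal.ofReal (s (n + k)) + (N : ℝ≥0∞) * 0)) :=
    tendsto_const_nhds.add (ENNReal.Tendsto.const_mul hlim (Or.inr (ENNReal.natCast_ne_top N)))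
  rw [mul_zero, add_zero] at hlim2
  refine ge_of_tendsto' hlim2 fun m => ?_
  refine (ENNReal.ofReal_le_ofReal (hm m)).trans ?_
  rw [ENNReal.ofReal_add (Finset.sum_nonneg fun _ _ => hs0 _) (mul_nonneg (by positivity) (hs0 _)),
    ENNReal.ofReal_sum_of_nonneg (fun _ _ => hs0 _), ENNReal.ofReal_mul (by positivity),
    ENNReal.ofReal_natCast]
  gcongr
  exact ENNReal.sum_le_tsum _

lemma aux_tails {H : Type*} [NormedAddCommGroup H] [InnerProductSpace ℂ H]
    [CompleteSpace H] (A B : H →L[ℂ] H) (hA : IsCompactOperator (A : H → H))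
    (hB : IsCompactOperator (B : H → H)) (k l : ℕ) :
    ∑' n, ENNReal.ofReal (approxNum (A + B) (n + (k + l))) ≤
      ∑' n, ENNReal.ofReal (approxNum A (n + k)) + ∑' n, ENNReal.ofReal (approxNum B (n + l)) := by
  obtain ⟨F, hFr, hFc, hF⟩ := aux_trace A hA k
  obtain ⟨G, hGr, hGc, hG⟩ := aux_trace B hB l
  have hFG : Module.rank ℂ (LinearMap.range ((F + G : H →L[ℂ] H) : H →ₗ[ℂ] H)) ≤
      ((k + l : ℕ) : Cardinal) := by
    refine (LinearMap.rank_add_le (F : H →ₗ[ℂ] H) (G : H →ₗ[ℂ] H)).trans ?_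
    push_cast
    exact add_le_add hFr hGr
  have hDc : IsCompactOperator ((A + B - (F + G) : H →L[ℂ] H) : H → H) :=
    (hA.add hB).sub (hFc.add hGc)
  obtain ⟨e, f, he1, hf1, hbe, hbf, hD, -⟩ := aux_svd2 _ hDc
  refine ENNReal.tsum_le_of_sum_range_le fun N => ?_
  rw [← ENNReal.ofReal_sum_of_nonneg (fun _ _ => approxNum_nonneg' _ _)]
  refine le_trans ?_ (add_le_add (hF e f he1 hf1 hbe hbf N) (hG e f he1 hf1 hbe hbf N))
  rw [← ENNReal.ofReal_add (Finset.sum_nonneg fun _ _ => norm_nonneg _)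
    (Finset.sum_nonneg fun _ _ => norm_nonneg _), ← Finset.sum_add_distrib]
  refine ENNReal.ofReal_le_ofReal (Finset.sum_le_sum fun i _ => ?_)
  refine (approxNum_shift' _ _ i _ hFG).trans ((hD i).trans ?_)
  have : (A + B - (F + G)) (e i) = (A - F) (e i) + (B - G) (e i) := by
    rw [← add_apply]; congr 1; abel
  rw [this, inner_add_right]
  exact norm_add_le _ _
lemma aux_min (a b c : ℕ → ℝ≥0∞) (ha : Antitone a) (hb : Antitone b)
    (h : ∀ k l, ∑' n, c (n + (k + l)) ≤ ∑' n, a (n + k) + ∑' n, b (n + l))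
    (t : ℝ≥0∞) (ht : t ≠ 0) :
    ∑' n, min (c n) t ≤ ∑' n, min (a n) t + ∑' n, min (b n) t := by
  have key : ∀ a : ℕ → ℝ≥0∞, Antitone a → (∑' n, min (a n) t = ⊤) ∨
      ∃ k : ℕ, ∑' n, min (a n) t = k * t + ∑' n, a (n + k) := by
    intro a ha
    by_cases hk : ∃ k, a k ≤ t
    · right
      classical
      refine ⟨Nat.find hk, ?_⟩
      rw [← (ENNReal.summable (f := fun n => min (a (n + Nat.find hk)) t)).sum_add_tsum_nat_add' (f := fun n => min (a n) t)]
      congr 1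
      · rw [Finset.sum_congr rfl (g := fun _ => t)]
        · simp
        · intro i hi
          exact min_eq_right (not_le.1 (Nat.find_min hk (Finset.mem_range.1 hi))).le
      · refine tsum_congr fun n => min_eq_left ((ha (Nat.le_add_left _ _)).trans (Nat.find_spec hk))
    · left
      push Not at hk
      rw [tsum_congr (g := fun _ => t) (fun n => min_eq_right (hk n).le)]
      exact ENNReal.tsum_const_eq_top_of_ne_zero ht
  rcases key a ha with h1 | ⟨k, hk⟩
  · rw [h1]; simp
  rcases key b hb with h1 | ⟨l, hl⟩
  · rw [h1]; simp
  rw [hk, hl, ← (ENNReal.summable (f := fun n => min (c (n + (k + l))) t)).sum_add_tsum_nat_add' (f := fun n => min (c n) t)]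
  calc _ ≤ ∑ i ∈ Finset.range (k + l), t + ∑' n, c (n + (k + l)) := by
        gcongr
        · exact min_le_right _ _
        · exact min_le_left _ _
    _ ≤ ((k + l : ℕ) * t) + (∑' n, a (n + k) + ∑' n, b (n + l)) := by
        gcongr
        · simp
        · exact h k l
    _ = _ := by push_cast; ring

open MeasureTheory Set in
lemma aux_int (p : ℝ) (hp0 : 0 < p) (hp1 : p < 1) (x : ℝ) (hx : 0 ≤ x) :
    ENNReal.ofReal x ^ p = ENNReal.ofReal (p * (1 - p)) *
      ∫⁻ t in Ioi (0 : ℝ), min (ENNReal.ofReal x) (ENNReal.ofReal t) * ENNReal.ofReal (t ^ (p - 2)) := by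
  rcases hx.eq_or_lt with rfl | hx
  · simp [hp0]
  have hsplit : Ioi (0 : ℝ) = Ioc 0 x ∪ Ioi x := (Ioc_union_Ioi_eq_Ioi hx.le).symm
  rw [hsplit, lintegral_union measurableSet_Ioi (by
    rw [Set.disjoint_left]; intro y hy hy2; exact absurd hy.2 (not_le.2 hy2))]
  have e1 : ∫⁻ t in Ioc (0 : ℝ) x, min (ENNReal.ofReal x) (ENNReal.ofReal t) *
      ENNReal.ofReal (t ^ (p - 2)) = ENNReal.ofReal (x ^ p / p) := by
    have hint : IntegrableOn (fun t : ℝ => t ^ (p - 1)) (Ioc 0 x) :=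
      (intervalIntegrable_iff_integrableOn_Ioc_of_le hx.le).1
        (intervalIntegral.intervalIntegrable_rpow' (by linarith))
    have hval : ∫ t in Ioc (0 : ℝ) x, t ^ (p - 1) = x ^ p / p := by
      rw [← intervalIntegral.integral_of_le hx.le, integral_rpow (Or.inl (by linarith))]
      simp [hp0.ne']
    rw [← hval, ofReal_integral_eq_lintegral_ofReal hint]
    · refine setLIntegral_congr_fun measurableSet_Ioc fun t ht => ?_
      rw [min_eq_right (ENNReal.ofReal_le_ofReal ht.2), ← ENNReal.ofReal_mul ht.1.le]
      congr 1
      nth_rewrite 1 [← Real.rpow_one t]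
      rw [← Real.rpow_add ht.1]; congr 1; ring
    · filter_upwards [ae_restrict_mem measurableSet_Ioc] with t ht
      exact Real.rpow_nonneg ht.1.le _
  have e2 : ∫⁻ t in Ioi x, min (ENNReal.ofReal x) (ENNReal.ofReal t) *
      ENNReal.ofReal (t ^ (p - 2)) = ENNReal.ofReal (x ^ p / (1 - p)) := by
    have hint : IntegrableOn (fun t : ℝ => x * t ^ (p - 2)) (Ioi x) :=
      (integrableOn_Ioi_rpow_of_lt (by linarith) hx).const_mul x
    have hval : ∫ t in Ioi x, x * t ^ (p - 2) = x ^ p / (1 - p) := by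
      rw [integral_const_mul, integral_Ioi_rpow_of_lt (by linarith) hx]
      have h1 : x ^ p = x * x ^ (p - 2 + 1) := by
        nth_rewrite 2 [← Real.rpow_one x]
        rw [← Real.rpow_add hx]; congr 1; ring
      rw [h1]
      have : p - 2 + 1 ≠ 0 := by linarith
      have h3 : 1 - p ≠ 0 := by linarith
      have h4 : 1 - p = -(p - 2 + 1) := by ring
      rw [h4]; field_simp
    rw [← hval, ofReal_integral_eq_lintegral_ofReal hint]
    · refine setLIntegral_congr_fun measurableSet_Ioi fun t ht => ?_
      rw [min_eq_left (ENNReal.ofReal_le_ofReal (le_of_lt ht)), ← ENNReal.ofReal_mul hx.le]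
    · filter_upwards [ae_restrict_mem measurableSet_Ioi] with t ht
      exact mul_nonneg hx.le (Real.rpow_nonneg (hx.trans ht).le _)
  have h1p : 0 < 1 - p := by linarith
  have hxp : 0 ≤ x ^ p := Real.rpow_nonneg hx.le _
  rw [e1, e2, ← ENNReal.ofReal_add (by positivity) (by positivity),
    ← ENNReal.ofReal_mul (by positivity), ENNReal.ofReal_rpow_of_pos hx]
  congr 1
  field_simp
  ring

open MeasureTheory Set in
theorem stmt8 {H : Type*} [NormedAddCommGroup H] [InnerProductSpace ℂ H] [CompleteSpace H]
    (A B : H →L[ℂ] H) (hA : IsCompactOperator (A : H → H)) (hB : IsCompactOperator (B : H → H))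
    (p : ℝ) (hp0 : 0 < p) (hp1 : p ≤ 1) :
    ∑' n : ℕ, ENNReal.ofReal (approxNum (A + B) n) ^ p ≤
      (∑' n : ℕ, ENNReal.ofReal (approxNum A n) ^ p) +
        ∑' n : ℕ, ENNReal.ofReal (approxNum B n) ^ p := by
  have ht := aux_tails A B hA hB
  rcases hp1.eq_or_lt with rfl | hp1
  · simpa using ht 0 0
  have hanti : ∀ A : H →L[ℂ] H, Antitone fun n => ENNReal.ofReal (approxNum A n) := by
    intro A m n hmn
    refine ENNReal.ofReal_le_ofReal (le_approxNum' _ _ _ fun F hF => approxNum_le' _ _ _ ?_)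
    exact hF.trans (by exact_mod_cast hmn)
  have hrep : ∀ A : H →L[ℂ] H, ∑' n : ℕ, ENNReal.ofReal (approxNum A n) ^ p =
      ENNReal.ofReal (p * (1 - p)) * ∫⁻ t in Ioi (0 : ℝ),
        (∑' n, min (ENNReal.ofReal (approxNum A n)) (ENNReal.ofReal t)) *
          ENNReal.ofReal (t ^ (p - 2)) := by
    intro A
    rw [tsum_congr fun n => aux_int p hp0 hp1 _ (approxNum_nonneg' A n), ENNReal.tsum_mul_left,
      ← lintegral_tsum]
    · simp only [ENNReal.tsum_mul_right]
    · intro n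
      fun_prop
  rw [hrep (A + B), hrep A, hrep B, ← mul_add, ← lintegral_add_left]
  · refine mul_le_mul' le_rfl ?_
    refine setLIntegral_mono' measurableSet_Ioi fun t ht0 => ?_
    rw [← add_mul]
    refine mul_le_mul' ?_ le_rfl
    exact aux_min _ _ _ (hanti A) (hanti B) ht _ (by simpa using ht0)
  · refine Measurable.mul (Measurable.tsum fun n => ?_) ?_ <;> fun_prop
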